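/- Let W be the ℂ-linear span of the products θ⁴[δᵢ]θ⁴[δⱼ]θ⁴[δₖ], where δᵢ, δⱼ, δₖ range over the ten even characteristics subject to the condition that the componentwise mod-2 sum δᵢ+δⱼ+δₖ is an odd characteristic. Then W has dimension exactly 20, and W contains the function Ξ₆[δ] and the function f_δ = 2Ξ₆[δ] − D_δ for every even characteristic δ. -/

import Mathlib

open scoped BigOperators

namespace TwoLoop

/-- 2×2 complex matrices. -/
abbrev Mat2 := Matrix (Fin 2) (Fin 2) ℂ

/-- The genus-2 Siegel upper half space: symmetric 2×2 complex matrices with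
positive definite imaginary part. -/
def SiegelH2 : Set Mat2 := {τ | τ.transpose = τ ∧ (τ.map Complex.im).PosDef}

/-- A (half-integer) theta characteristic `[a;b]`, recorded by its rows `a, b ∈ {0,1}²`. -/
abbrev Char := (Fin 2 → ℤ) × (Fin 2 → ℤ)

/-- The theta constant `θ[a;b](τ) = Σ_{n ∈ ℤ²} exp(πi (n+a/2)ᵀ τ (n+a/2) + πi (n+a/2)·b)`. -/
noncomputable def theta (κ : Char) (τ : Mat2) : ℂ :=
  ∑' n : Fin 2 → ℤ,
    Complex.exp ((Real.pi : ℂ) * Complex.I *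
      ((∑ i, ∑ j, ((n i : ℂ) + (κ.1 i : ℂ) / 2) * τ i j * ((n j : ℂ) + (κ.1 j : ℂ) / 2))
        + ∑ i, ((n i : ℂ) + (κ.1 i : ℂ) / 2) * (κ.2 i : ℂ)))

/-- The ten even characteristics δ₁,…,δ₁₀. -/
def δev : Fin 10 → Char :=
  ![(![0,0], ![0,0]), (![0,0], ![0,1]), (![0,0], ![1,0]), (![0,0], ![1,1]),
    (![0,1], ![0,0]), (![0,1], ![1,0]), (![1,0], ![0,0]), (![1,0], ![0,1]),
    (![1,1], ![0,0]), (![1,1], ![1,1])]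

/-- The six odd characteristics ν₁,…,ν₆. -/
def νodd : Fin 6 → Char :=
  ![(![0,1], ![0,1]), (![1,0], ![1,0]), (![0,1], ![1,1]),
    (![1,0], ![1,1]), (![1,1], ![0,1]), (![1,1], ![1,0])]

/-- `Θ[ε](τ) = θ[ε;0](2τ)`. -/
noncomputable def Θf (ε : Fin 2 → ℤ) (τ : Mat2) : ℂ := theta (ε, ![0,0]) ((2 : ℂ) • τ)

noncomputable def P0 (τ : Mat2) : ℂ :=
  Θf ![0,0] τ ^ 4 + Θf ![0,1] τ ^ 4 + Θf ![1,0] τ ^ 4 + Θf ![1,1] τ ^ 4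
noncomputable def P1 (τ : Mat2) : ℂ :=
  2 * (Θf ![0,0] τ ^ 2 * Θf ![0,1] τ ^ 2 + Θf ![1,0] τ ^ 2 * Θf ![1,1] τ ^ 2)
noncomputable def P2 (τ : Mat2) : ℂ :=
  2 * (Θf ![0,0] τ ^ 2 * Θf ![1,0] τ ^ 2 + Θf ![0,1] τ ^ 2 * Θf ![1,1] τ ^ 2)
noncomputable def P3 (τ : Mat2) : ℂ :=
  2 * (Θf ![0,0] τ ^ 2 * Θf ![1,1] τ ^ 2 + Θf ![0,1] τ ^ 2 * Θf ![1,0] τ ^ 2)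
noncomputable def P4 (τ : Mat2) : ℂ :=
  4 * (Θf ![0,0] τ * Θf ![0,1] τ * Θf ![1,0] τ * Θf ![1,1] τ)

/-- The vector `(P₀,…,P₄)`. -/
noncomputable def Pv : Fin 5 → Mat2 → ℂ := ![P0, P1, P2, P3, P4]

open MvPolynomial in
/-- The Igusa quartic as a polynomial in `x₀,…,x₄`. -/
noncomputable def I4poly : MvPolynomial (Fin 5) ℂ :=
  X 4 ^ 4 + X 4 ^ 2 * X 0 ^ 2 - X 4 ^ 2 * X 1 ^ 2 - X 4 ^ 2 * X 2 ^ 2 - X 4 ^ 2 * X 3 ^ 2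
    + X 1 ^ 2 * X 2 ^ 2 + X 1 ^ 2 * X 3 ^ 2 + X 2 ^ 2 * X 3 ^ 2
    - 2 * (X 0 * X 1 * X 2 * X 3)

/-- The signature `⟨κ|λ⟩ = exp(πi(a_κ·b_λ − b_κ·a_λ))`. -/
noncomputable def sig (κ lam : Char) : ℂ :=
  Complex.exp ((Real.pi : ℂ) * Complex.I *
    (((∑ i, κ.1 i * lam.2 i : ℤ) : ℂ) - ((∑ i, κ.2 i * lam.1 i : ℤ) : ℂ)))

/-- Componentwise mod-2 sum of characteristics. -/
def addChar (κ lam : Char) : Char :=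
  (fun i => (κ.1 i + lam.1 i) % 2, fun i => (κ.2 i + lam.2 i) % 2)

/-- For each even characteristic `δ_d`, the ordering `(k₁,…,k₆)` of `{1,…,6}` (0-indexed) whose
first three entries form the triad of odd characteristics with `δ_d = ν_{k₁}+ν_{k₂}+ν_{k₃}`
and whose last three are the complementary indices. -/
def triad : Fin 10 → Fin 6 → Fin 6 :=
  ![![0,3,5,1,2,4], ![0,1,5,2,3,4], ![0,1,4,2,3,5], ![0,3,4,1,2,5], ![0,1,3,2,4,5],
    ![0,4,5,1,2,3], ![0,1,2,3,4,5], ![0,2,3,1,4,5], ![0,2,5,1,3,4], ![0,2,4,1,3,5]]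

/-- D'Hoker–Phong's `Ξ₆[δ]`. -/
noncomputable def Xi6 (d : Fin 10) (τ : Mat2) : ℂ :=
  ∑ i : Fin 3, ∑ j : Fin 3,
    if i < j then
      sig (νodd (triad d (Fin.castLE (by norm_num) i))) (νodd (triad d (Fin.castLE (by norm_num) j))) *
        ∏ m : Fin 3,
          theta (addChar (addChar (νodd (triad d (Fin.castLE (by norm_num) i)))
              (νodd (triad d (Fin.castLE (by norm_num) j))))
            (νodd (triad d (⟨m.1 + 3, by omega⟩ : Fin 6)))) τ ^ 4
    else 0

/-- The formal derivative `∂I₄/∂θ⁴[δ]` of the Igusa quartic with respect to the ten fourth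
powers of the even theta constants, regarded as independent variables. -/
noncomputable def Dd (d : Fin 10) (τ : Mat2) : ℂ :=
  (1 / 48 : ℂ) *
    (theta (δev d) τ ^ 4 * (∑ d' : Fin 10, theta (δev d') τ ^ 8) - 4 * theta (δev d) τ ^ 12)

/-- `f_δ = 2Ξ₆[δ] − ∂I₄/∂θ⁴[δ]`. -/
noncomputable def fδ (d : Fin 10) (τ : Mat2) : ℂ := 2 * Xi6 d τ - Dd d τ

/-- `Ψ₆`, the weight-6 modular form. -/
noncomputable def Ψ6 (τ : Mat2) : ℂ :=
  P0 τ ^ 3 - 9 * P0 τ * (P1 τ ^ 2 + P2 τ ^ 2 + P3 τ ^ 2 - 4 * P4 τ ^ 2)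
    + 54 * (P1 τ * P2 τ * P3 τ)

/-- `Ψ₁₀`, the weight-10 modular form. -/
noncomputable def Ψ10 (τ : Mat2) : ℂ := ∏ d : Fin 10, theta (δev d) τ ^ 2

/-- A characteristic is even when `a·b` is even. -/
def IsEvenChar (κ : Char) : Prop := (∑ i, κ.1 i * κ.2 i) % 2 = 0

/-- A characteristic is odd when `a·b` is odd. -/
def IsOddChar (κ : Char) : Prop := (∑ i, κ.1 i * κ.2 i) % 2 = 1

/-- The span `W` of the products `θ⁴[δᵢ]θ⁴[δⱼ]θ⁴[δₖ]` with `δᵢ+δⱼ+δₖ` an odd characteristic. -/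
noncomputable def Wodd : Submodule ℂ (SiegelH2 → ℂ) :=
  Submodule.span ℂ
    {g : SiegelH2 → ℂ | ∃ i j k : Fin 10,
      IsOddChar (addChar (addChar (δev i) (δev j)) (δev k)) ∧
      g = fun τ : SiegelH2 =>
        theta (δev i) τ.1 ^ 4 * theta (δev j) τ.1 ^ 4 * theta (δev k) τ.1 ^ 4}


/-! ### Summability -/

lemma summable_exp_int (c : ℝ) (hc : 0 < c) (x : ℝ) :
    Summable (fun n : ℤ => Real.exp (-c * ((n : ℝ) + x) ^ 2)) := by
  have h1 : Summable (fun n : ℤ => Real.exp (-c * |(n : ℝ)|)) := by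
    have h0 : Summable (fun n : ℕ => Real.exp (-c * (n : ℝ))) := by
      have := Real.summable_exp_nat_mul_iff.mpr (show -c < 0 by linarith)
      refine this.congr fun n => by ring_nf
    apply Summable.of_nat_of_neg
    · simpa using h0
    · simpa using h0
  refine Summable.of_nonneg_of_le (fun n => (Real.exp_pos _).le) (fun n => ?_)
    (h1.mul_left (Real.exp (c * (|x| + 1))))
  rw [← Real.exp_add]
  apply Real.exp_le_exp.mpr
  have h2 : |(n : ℝ)| ≤ |(n : ℝ) + x| + |x| := by
    have := abs_sub ((n : ℝ) + x) x
    simpa using this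
  have h3 : |(n : ℝ) + x| ≤ ((n : ℝ) + x) ^ 2 + 1 := by
    rw [← sq_abs ((n : ℝ) + x)]
    nlinarith [sq_nonneg (|(n : ℝ) + x| - 1), abs_nonneg ((n : ℝ) + x)]
  nlinarith

lemma summable_exp_two (c : ℝ) (hc : 0 < c) (x y : ℝ) :
    Summable (fun n : Fin 2 → ℤ =>
      Real.exp (-c * (((n 0 : ℝ) + x) ^ 2 + ((n 1 : ℝ) + y) ^ 2))) := by
  have h := (summable_exp_int c hc x).mul_of_nonneg (summable_exp_int c hc y)
    (fun n => (Real.exp_pos _).le) (fun n => (Real.exp_pos _).le)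
  rw [← (finTwoArrowEquiv ℤ).summable_iff] at h
  refine h.congr fun n => ?_
  change Real.exp (-c * (((n 0 : ℤ) : ℝ) + x) ^ 2) * Real.exp (-c * (((n 1 : ℤ) : ℝ) + y) ^ 2) = _
  rw [← Real.exp_add]
  ring_nf

/-- The general term of the theta series. -/
noncomputable def term (κ : Char) (τ : Mat2) (n : Fin 2 → ℤ) : ℂ :=
    Complex.exp ((Real.pi : ℂ) * Complex.I *
      ((∑ i, ∑ j, ((n i : ℂ) + (κ.1 i : ℂ) / 2) * τ i j * ((n j : ℂ) + (κ.1 j : ℂ) / 2))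
        + ∑ i, ((n i : ℂ) + (κ.1 i : ℂ) / 2) * (κ.2 i : ℂ)))

lemma theta_eq (κ : Char) (τ : Mat2) : theta κ τ = ∑' n, term κ τ n := rfl

lemma norm_term (κ : Char) (τ : Mat2) (n : Fin 2 → ℤ) :
    ‖term κ τ n‖ = Real.exp (-Real.pi *
      (((n 0 : ℝ) + κ.1 0 / 2) ^ 2 * (τ 0 0).im
        + ((n 0 : ℝ) + κ.1 0 / 2) * ((n 1 : ℝ) + κ.1 1 / 2) * ((τ 0 1).im + (τ 1 0).im)
        + ((n 1 : ℝ) + κ.1 1 / 2) ^ 2 * (τ 1 1).im)) := by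
  have e : ∀ i, ((n i : ℂ) + (κ.1 i : ℂ) / 2) = (((n i : ℝ) + (κ.1 i : ℝ) / 2 : ℝ) : ℂ) := by
    intro i; push_cast; rfl
  have e' : ∀ i, (κ.2 i : ℂ) = ((κ.2 i : ℝ) : ℂ) := by
    intro i; push_cast; rfl
  rw [term, Complex.norm_exp]
  congr 1
  simp only [e, e', Fin.sum_univ_two]
  generalize ((n 0 : ℝ) + (κ.1 0 : ℝ) / 2) = x
  generalize ((n 1 : ℝ) + (κ.1 1 : ℝ) / 2) = y
  simp
  ring

lemma H2_facts {τ : Mat2} (h : τ ∈ SiegelH2) :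
    τ 1 0 = τ 0 1 ∧ 0 < (τ 0 0).im ∧ 0 < (τ 1 1).im ∧
      0 < (τ 0 0).im * (τ 1 1).im - (τ 0 1).im ^ 2 := by
  obtain ⟨h1, h2⟩ := h
  have hs : τ 1 0 = τ 0 1 := by
    have := congrFun (congrFun h1 0) 1
    simpa using this
  refine ⟨hs, ?_, ?_, ?_⟩
  · simpa using h2.diag_pos (i := 0)
  · simpa using h2.diag_pos (i := 1)
  · have := h2.det_pos
    rw [Matrix.det_fin_two] at this
    simp [hs] at this
    nlinarith

lemma summable_norm_term (κ : Char) {τ : Mat2} (h : τ ∈ SiegelH2) :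
    Summable (fun n => ‖term κ τ n‖) := by
  obtain ⟨hs, h0, h1, hd⟩ := H2_facts h
  set p := (τ 0 0).im
  set q := (τ 1 1).im
  set r := (τ 0 1).im with hr
  have hl : 0 < (p * q - r ^ 2) / (p + q) := by positivity
  refine Summable.of_nonneg_of_le (fun n => norm_nonneg _) (fun n => ?_)
    (summable_exp_two (Real.pi * ((p * q - r ^ 2) / (p + q))) (by positivity)
      (κ.1 0 / 2) (κ.1 1 / 2))
  rw [norm_term, hs, ← hr]
  apply Real.exp_le_exp.mpr
  generalize ((n 0 : ℝ) + (κ.1 0 : ℝ) / 2) = x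
  generalize ((n 1 : ℝ) + (κ.1 1 : ℝ) / 2) = y
  have key : (p * q - r ^ 2) / (p + q) * (x ^ 2 + y ^ 2)
      ≤ x ^ 2 * p + x * y * (r + r) + y ^ 2 * q := by
    rw [div_mul_eq_mul_div, div_le_iff₀ (by positivity)]
    nlinarith [sq_nonneg (p * x + r * y), sq_nonneg (r * x + q * y)]
  have := Real.pi_pos
  nlinarith

lemma two_smul_mem {τ : Mat2} (h : τ ∈ SiegelH2) : (2 : ℂ) • τ ∈ SiegelH2 := by
  obtain ⟨h1, h2⟩ := h
  refine ⟨by rw [Matrix.transpose_smul, h1], ?_⟩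
  have : ((2 : ℂ) • τ).map Complex.im = (2 : ℝ) • τ.map Complex.im := by
    ext i j; simp
  rw [this]
  exact h2.smul (by norm_num)

/-! ### The addition formula -/

/-- `(n, m) ↔ (c, k, l)` with `n = k + l + c`, `m = k - l`, one coordinate. -/
def splitEquiv : ℤ × ℤ ≃ Fin 2 × ℤ × ℤ where
  toFun p := (⟨((p.1 + p.2) % 2).toNat, by omega⟩, (p.1 + p.2) / 2, (p.1 + p.2) / 2 - p.2)
  invFun q := (q.2.1 + q.2.2 + (q.1 : ℕ), q.2.1 - q.2.2)
  left_inv p := by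
    ext <;> simp
    omega
  right_inv q := by
    obtain ⟨⟨c, hc⟩, k, l⟩ := q
    ext <;> simp <;> omega

/-- Two-coordinate version, inverse direction. -/
def splitEquiv2 : ((Fin 2 → Fin 2) × (Fin 2 → ℤ) × (Fin 2 → ℤ)) ≃ (Fin 2 → ℤ) × (Fin 2 → ℤ) where
  toFun q := (fun i => q.2.1 i + q.2.2 i + (q.1 i : ℕ), fun i => q.2.1 i - q.2.2 i)
  invFun p := (fun i => (splitEquiv (p.1 i, p.2 i)).1, fun i => (splitEquiv (p.1 i, p.2 i)).2.1,
    fun i => (splitEquiv (p.1 i, p.2 i)).2.2)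
  left_inv q := by
    have h : ∀ i, splitEquiv (q.2.1 i + q.2.2 i + (q.1 i : ℕ), q.2.1 i - q.2.2 i)
        = (q.1 i, q.2.1 i, q.2.2 i) := fun i => splitEquiv.right_inv (q.1 i, q.2.1 i, q.2.2 i)
    simp only [h]
  right_inv p := by
    have h : ∀ i, splitEquiv.symm (splitEquiv (p.1 i, p.2 i)) = (p.1 i, p.2 i) :=
      fun i => splitEquiv.left_inv _
    refine Prod.ext (funext fun i => ?_) (funext fun i => ?_)
    · exact congrArg Prod.fst (h i)
    · exact congrArg Prod.snd (h i)

/-- integer vector of a bit vector -/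
def bits (c : Fin 2 → Fin 2) : Fin 2 → ℤ := fun i => ((c i : ℕ) : ℤ)

lemma term_mul (a b : Fin 2 → ℤ) {τ : Mat2} (hs : τ 1 0 = τ 0 1) (c : Fin 2 → Fin 2)
    (k l : Fin 2 → ℤ) :
    term (a, b) τ (splitEquiv2 (c, k, l)).1 * term (a, b) τ (splitEquiv2 (c, k, l)).2
      = (-1) ^ ((bits c 0 + a 0) * b 0 + (bits c 1 + a 1) * b 1) *
        (term (fun i => bits c i + a i, ![0,0]) ((2 : ℂ) • τ) k
          * term (bits c, ![0,0]) ((2 : ℂ) • τ) l) := by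
  have e1 : ((-1 : ℂ)) ^ ((bits c 0 + a 0) * b 0 + (bits c 1 + a 1) * b 1)
      = Complex.exp ((Real.pi : ℂ) * Complex.I *
        ((bits c 0 + a 0) * b 0 + (bits c 1 + a 1) * b 1)) := by
    rw [← Complex.exp_pi_mul_I, ← Complex.exp_int_mul]
    congr 1; push_cast; ring
  have e2 : Complex.exp ((Real.pi : ℂ) * Complex.I * (2 * (k 0 * b 0 + k 1 * b 1))) = 1 := by
    rw [Complex.exp_eq_one_iff]
    exact ⟨k 0 * b 0 + k 1 * b 1, by push_cast; ring⟩
  rw [e1, ← one_mul (term (a, b) τ (splitEquiv2 (c, k, l)).1), ← e2]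
  simp only [term]
  rw [← Complex.exp_add, ← Complex.exp_add, ← Complex.exp_add, ← Complex.exp_add]
  rw [Complex.exp_eq_exp_iff_exists_int]
  refine ⟨2 * (k 0 * b 0 + k 1 * b 1), ?_⟩
  simp only [Fin.sum_univ_two, splitEquiv2, Equiv.coe_fn_mk, bits]
  simp [hs]
  ring

lemma theta_sq (a b : Fin 2 → ℤ) {τ : Mat2} (h : τ ∈ SiegelH2) :
    theta (a, b) τ ^ 2 = ∑ c : Fin 2 → Fin 2,
      (-1) ^ ((bits c 0 + a 0) * b 0 + (bits c 1 + a 1) * b 1) *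
        (Θf (fun i => bits c i + a i) τ * Θf (bits c) τ) := by
  have hn := summable_norm_term (a, b) h
  have h2 := two_smul_mem h
  rw [sq, theta_eq, tsum_mul_tsum_of_summable_norm hn hn]
  have hsum : Summable fun z : (Fin 2 → ℤ) × (Fin 2 → ℤ) => term (a, b) τ z.1 * term (a, b) τ z.2 :=
    summable_mul_of_summable_norm hn hn
  rw [← splitEquiv2.tsum_eq]
  have hsum' := (splitEquiv2.summable_iff).mpr hsum
  rw [Summable.tsum_prod (f := fun q => term (a, b) τ (splitEquiv2 q).1 *
    term (a, b) τ (splitEquiv2 q).2) hsum', tsum_fintype]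
  refine Finset.sum_congr rfl fun c _ => ?_
  have hs := (H2_facts h).1
  simp only [term_mul a b hs]
  rw [tsum_mul_left, Θf, Θf, theta_eq, theta_eq,
    tsum_mul_tsum_of_summable_norm (summable_norm_term _ h2) (summable_norm_term _ h2)]

lemma Θf_shift (ε e : Fin 2 → ℤ) (τ : Mat2) : Θf (fun i => ε i + 2 * e i) τ = Θf ε τ := by
  rw [Θf, Θf, theta_eq, theta_eq, ← (Equiv.addRight e).tsum_eq (term (ε, ![0,0]) _)]
  refine tsum_congr fun n => ?_
  simp only [term, Equiv.coe_addRight, Fin.sum_univ_two, Pi.add_apply]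
  congr 1
  push_cast
  simp
  ring

lemma Θf_mod (ε ε' : Fin 2 → ℤ) (τ : Mat2) (h0 : ε 0 % 2 = ε' 0 % 2) (h1 : ε 1 % 2 = ε' 1 % 2) :
    Θf ε τ = Θf ε' τ := by
  have : ε = fun i => ε' i + 2 * ((ε i - ε' i) / 2) := by
    funext i
    fin_cases i <;> simp <;> omega
  rw [this]
  exact Θf_shift ε' (fun i => (ε i - ε' i) / 2) τ

lemma sum_bits (f : (Fin 2 → Fin 2) → ℂ) :
    ∑ c, f c = f ![0,0] + f ![0,1] + f ![1,0] + f ![1,1] := by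
  rw [← (finTwoArrowEquiv (Fin 2)).symm.sum_comp, Fintype.sum_prod_type]
  simp only [Fin.sum_univ_two, finTwoArrowEquiv_symm_apply]
  ring

lemma bits_eq (u v : Fin 2) : bits ![u, v] = ![((u : ℕ) : ℤ), ((v : ℕ) : ℤ)] := by
  funext i; fin_cases i <;> rfl

/-- coefficients of `θ⁴[δ]` in terms of the `P`s -/
def L : Fin 10 → Fin 5 → ℤ :=
  ![![1,1,1,1,0], ![1,-1,1,-1,0], ![1,1,-1,-1,0], ![1,-1,-1,1,0],
    ![0,2,0,0,2], ![0,2,0,0,-2], ![0,0,2,0,2], ![0,0,2,0,-2], ![0,0,0,2,2], ![0,0,0,2,-2]]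

/-- linear form with integer coefficients -/
def lf (l : Fin 5 → ℤ) (x : Fin 5 → ℂ) : ℂ :=
  l 0 * x 0 + l 1 * x 1 + l 2 * x 2 + l 3 * x 3 + l 4 * x 4

/-- values of the `P`s -/
noncomputable def pv (τ : Mat2) : Fin 5 → ℂ := ![P0 τ, P1 τ, P2 τ, P3 τ, P4 τ]

lemma theta_four (d : Fin 10) {τ : Mat2} (h : τ ∈ SiegelH2) :
    theta (δev d) τ ^ 4 = lf (L d) (pv τ) := by
  have e : theta (δev d) τ ^ 4 = (theta ((δev d).1, (δev d).2) τ ^ 2) ^ 2 := by ring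
  rw [e, theta_sq _ _ h, sum_bits]
  have hh : ∀ u v : Fin 2, Θf (fun i => bits ![u, v] i + (δev d).1 i) τ
      = Θf ![(((u : ℕ) : ℤ) + (δev d).1 0) % 2, (((v : ℕ) : ℤ) + (δev d).1 1) % 2] τ := by
    intro u v
    apply Θf_mod <;> simp [bits]
  simp only [hh]
  simp only [bits_eq, lf, pv, L, P0, P1, P2, P3, P4]
  fin_cases d <;> simp [δev] <;> ring

/-! ### Asymptotics along a path in the Siegel upper half space -/

open Filter Topology

/-- The path `T ↦ i T M`. -/
noncomputable def path (T : ℝ) : Mat2 :=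
  !![17 * (T * Complex.I), -16 * (T * Complex.I); -16 * (T * Complex.I), 20 * (T * Complex.I)]

lemma path_mem {T : ℝ} (hT : 0 < T) : path T ∈ SiegelH2 := by
  refine ⟨?_, ?_⟩
  · ext i j
    fin_cases i <;> fin_cases j <;> simp [path]
  · refine Matrix.PosDef.of_dotProduct_mulVec_pos ?_ ?_
    · ext i j
      fin_cases i <;> fin_cases j <;> simp [path]
    · intro x hx
      have hx' : x 0 ≠ 0 ∨ x 1 ≠ 0 := by
        by_contra hc
        push Not at hc
        apply hx
        funext i
        fin_cases i
        · exact hc.1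
        · exact hc.2
      have : 0 < T * (x 0 ^ 2 + 4 * x 1 ^ 2 + 16 * (x 0 - x 1) ^ 2) := by
        apply mul_pos hT
        rcases hx' with h | h <;> positivity
      simp [path, Matrix.mulVec, dotProduct, Fin.sum_univ_two]
      nlinarith

/-- The exponents in the theta series along the path. -/
def qe (ε n : Fin 2 → ℤ) : ℤ :=
  (2 * n 0 + ε 0) ^ 2 + 4 * (2 * n 1 + ε 1) ^ 2 + 16 * (2 * n 0 + ε 0 - (2 * n 1 + ε 1)) ^ 2

lemma term_path (ε n : Fin 2 → ℤ) (T : ℝ) :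
    term (ε, ![0,0]) ((2 : ℂ) • path T) n = ((Real.exp (-(Real.pi / 2) * T * qe ε n) : ℝ) : ℂ) := by
  rw [term, Complex.ofReal_exp]
  congr 1
  simp only [Fin.sum_univ_two, path, qe]
  simp
  have hI : Complex.I * Complex.I = -1 := Complex.I_mul_I
  linear_combination (17 * (n 0 + ε 0 / 2) ^ 2 - 32 * (n 0 + ε 0 / 2) * (n 1 + ε 1 / 2)
    + 20 * (n 1 + ε 1 / 2) ^ 2 : ℂ) * 2 * Real.pi * T * hI

/-- The small parameter. -/
noncomputable def sm (T : ℝ) : ℂ := ((Real.exp (-(Real.pi / 2) * T) : ℝ) : ℂ)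

lemma sm_ne (T : ℝ) : sm T ≠ 0 := by
  simp [sm]

lemma sm_tendsto : Tendsto sm atTop (𝓝 0) := by
  have : Tendsto (fun T : ℝ => Real.exp (-(Real.pi / 2) * T)) atTop (𝓝 0) := by
    apply Real.tendsto_exp_atBot.comp
    exact tendsto_id.const_mul_atTop_of_neg (by linarith [Real.pi_pos])
  have h := (Complex.continuous_ofReal.tendsto 0).comp this
  rw [Complex.ofReal_zero] at h
  exact h

lemma summable_qe (ε : Fin 2 → ℤ) :
    Summable (fun n : Fin 2 → ℤ => Real.exp (-(Real.pi / 2) * qe ε n)) := by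
  refine Summable.of_nonneg_of_le (fun n => (Real.exp_pos _).le) (fun n => ?_)
    (summable_exp_two (2 * Real.pi) (by positivity) (ε 0 / 2) (ε 1 / 2))
  apply Real.exp_le_exp.mpr
  have h : 4 * (((n 0 : ℝ) + ε 0 / 2) ^ 2 + ((n 1 : ℝ) + ε 1 / 2) ^ 2) ≤ (qe ε n : ℝ) := by
    simp only [qe]
    push_cast
    nlinarith [sq_nonneg (2 * (n 0 : ℝ) + ε 0 - (2 * n 1 + ε 1)), sq_nonneg (2 * (n 1 : ℝ) + ε 1)]
  have := Real.pi_pos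
  nlinarith

lemma Θ_asymp (ε : Fin 2 → ℤ) (w : ℕ) (hw : ∀ n, (w : ℤ) ≤ qe ε n) (n₀ : Fin 2 → ℤ)
    (h0 : qe ε n₀ = w) :
    ∃ (c : ℂ) (u : ℝ → ℂ), c ≠ 0 ∧ Tendsto u atTop (𝓝 c) ∧
      ∀ T, Θf ε (path T) = sm T ^ w * u T := by
  classical
  let bd : (Fin 2 → ℤ) → ℝ := fun n => Real.exp (-(Real.pi / 2) * (qe ε n - w))
  have hbd : Summable bd := by
    have := (summable_qe ε).mul_left (Real.exp (Real.pi / 2 * w))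
    refine this.congr fun n => ?_
    rw [← Real.exp_add]
    congr 1; ring
  let ind : (Fin 2 → ℤ) → ℝ := fun n => if qe ε n = w then 1 else 0
  have hind0 : ∀ n, 0 ≤ ind n := fun n => by
    simp only [ind]; split_ifs <;> norm_num
  have hind : Summable ind := by
    refine Summable.of_nonneg_of_le hind0 (fun n => ?_) hbd
    simp only [ind, bd]
    split_ifs with h
    · rw [h]; simp
    · exact (Real.exp_pos _).le
  have hpos : 0 < ∑' n, ind n := hind.tsum_pos hind0 n₀ (by simp [ind, h0])
  refine ⟨((∑' n, ind n : ℝ) : ℂ), fun T => ((∑' n, Real.exp (-(Real.pi / 2) * T * (qe ε n - w)) : ℝ) : ℂ),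
    by exact_mod_cast hpos.ne', ?_, ?_⟩
  · apply (Complex.continuous_ofReal.tendsto _).comp
    refine tendsto_tsum_of_dominated_convergence hbd (fun n => ?_) ?_
    · by_cases h : qe ε n = w
      · simp [ind, h]
      · have hlt : (0 : ℝ) < qe ε n - w := by
          have : (w : ℤ) < qe ε n := lt_of_le_of_ne (hw n) (Ne.symm h)
          have : ((w : ℤ) : ℝ) < qe ε n := by exact_mod_cast this
          push_cast at this
          linarith
        simp only [ind, h, if_false]
        apply Real.tendsto_exp_atBot.comp
        have := (tendsto_id (α := ℝ) (x := atTop)).const_mul_atTop_of_neg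
          (show -(Real.pi / 2) * (qe ε n - w) < 0 by nlinarith [Real.pi_pos])
        refine this.congr fun T => ?_
        simp only [id]; ring
    · filter_upwards [eventually_ge_atTop 1] with T hT n
      have hle : (0 : ℝ) ≤ qe ε n - w := by
        have : ((w : ℤ) : ℝ) ≤ qe ε n := by exact_mod_cast hw n
        push_cast at this
        linarith
      rw [Real.norm_eq_abs, abs_of_pos (Real.exp_pos _)]
      apply Real.exp_le_exp.mpr
      have := Real.pi_pos
      have h2 : 0 ≤ (T - 1) * (Real.pi / 2 * (qe ε n - w)) := by
        apply mul_nonneg (by linarith); positivity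
      nlinarith
  · intro T
    rw [Θf, theta_eq]
    simp only [term_path]
    rw [← Complex.ofReal_tsum, sm, ← Complex.ofReal_pow, ← Complex.ofReal_mul, ← tsum_mul_left]
    congr 1
    refine tsum_congr fun n => ?_
    rw [← Real.exp_nat_mul, ← Real.exp_add]
    congr 1; ring

lemma one_le_odd_sq (n : ℤ) : 1 ≤ (2 * n + 1) ^ 2 := by
  have : (2 * n + 1) ≠ 0 := by omega
  have := sq_pos_of_ne_zero this
  omega

/-- weights of the `P`s -/
def ω : Fin 5 → ℕ := ![0, 40, 34, 10, 42]

lemma pv_asymp : ∃ (d : Fin 5 → ℂ) (v : Fin 5 → ℝ → ℂ), (∀ i, d i ≠ 0) ∧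
    d 1 * d 2 * d 3 - d 0 * d 4 * d 4 ≠ 0 ∧
    (∀ i, Tendsto (v i) atTop (𝓝 (d i))) ∧ ∀ i T, pv (path T) i = sm T ^ ω i * v i T := by
  obtain ⟨c0, u0, hc0, hu0, e0⟩ := Θ_asymp ![0,0] 0 (fun n => by simp [qe]; positivity) ![0,0]
    (by simp [qe])
  obtain ⟨c1, u1, hc1, hu1, e1⟩ := Θ_asymp ![0,1] 20 (fun n => by
    simp [qe]
    have h1 := one_le_odd_sq (n 1)
    have h2 := one_le_odd_sq (n 0 - n 1 - 1)
    nlinarith [sq_nonneg (n 0)]) ![0,0] (by simp [qe])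
  obtain ⟨c2, u2, hc2, hu2, e2⟩ := Θ_asymp ![1,0] 17 (fun n => by
    simp [qe]
    have h1 := one_le_odd_sq (n 0)
    have h2 := one_le_odd_sq (n 0 - n 1)
    nlinarith [sq_nonneg (n 1)]) ![0,0] (by simp [qe])
  obtain ⟨c3, u3, hc3, hu3, e3⟩ := Θ_asymp ![1,1] 5 (fun n => by
    simp [qe]
    have h1 := one_le_odd_sq (n 0)
    have h2 := one_le_odd_sq (n 1)
    nlinarith [sq_nonneg (n 0 - n 1)]) ![0,0] (by simp [qe])
  have hs := sm_tendsto
  refine ⟨![c0 ^ 4, 2 * (c0 ^ 2 * c1 ^ 2), 2 * (c0 ^ 2 * c2 ^ 2), 2 * (c0 ^ 2 * c3 ^ 2),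
      4 * (c0 * c1 * c2 * c3)],
    ![fun T => u0 T ^ 4 + sm T ^ 80 * u1 T ^ 4 + sm T ^ 68 * u2 T ^ 4 + sm T ^ 20 * u3 T ^ 4,
      fun T => 2 * (u0 T ^ 2 * u1 T ^ 2 + sm T ^ 4 * (u2 T ^ 2 * u3 T ^ 2)),
      fun T => 2 * (u0 T ^ 2 * u2 T ^ 2 + sm T ^ 16 * (u1 T ^ 2 * u3 T ^ 2)),
      fun T => 2 * (u0 T ^ 2 * u3 T ^ 2 + sm T ^ 64 * (u1 T ^ 2 * u2 T ^ 2)),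
      fun T => 4 * (u0 T * u1 T * u2 T * u3 T)], ?_, ?_, ?_, ?_⟩
  · intro i
    fin_cases i <;> simp [hc0, hc1, hc2, hc3]
  · have : -8 * (c0 ^ 6 * c1 ^ 2 * c2 ^ 2 * c3 ^ 2) ≠ 0 := by simp [hc0, hc1, hc2, hc3]
    convert this using 1
    simp
    ring
  · intro i
    fin_cases i
    · have := (((hu0.pow 4).add ((hs.pow 80).mul (hu1.pow 4))).add
        ((hs.pow 68).mul (hu2.pow 4))).add ((hs.pow 20).mul (hu3.pow 4))
      simpa using this
    · have := (((hu0.pow 2).mul (hu1.pow 2)).add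
        ((hs.pow 4).mul ((hu2.pow 2).mul (hu3.pow 2)))).const_mul 2
      simpa using this
    · have := (((hu0.pow 2).mul (hu2.pow 2)).add
        ((hs.pow 16).mul ((hu1.pow 2).mul (hu3.pow 2)))).const_mul 2
      simpa using this
    · have := (((hu0.pow 2).mul (hu3.pow 2)).add
        ((hs.pow 64).mul ((hu1.pow 2).mul (hu2.pow 2)))).const_mul 2
      simpa using this
    · have := (((hu0.mul hu1).mul hu2).mul hu3).const_mul 4
      simpa using this
  · intro i T
    fin_cases i <;> simp [pv, ω, P0, P1, P2, P3, P4, e0, e1, e2, e3] <;> ring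

lemma indep_aux {ι : Type*} [Fintype ι] (F h : ι → ℝ → ℂ) (W : ι → ℕ) (hW : Function.Injective W)
    (c : ι → ℂ) (hc : ∀ i, c i ≠ 0) (hF : ∀ i T, F i T = sm T ^ W i * h i T)
    (hh : ∀ i, Tendsto (h i) atTop (𝓝 (c i))) (a : ι → ℂ)
    (hz : ∀ T, 0 < T → ∑ i, a i * F i T = 0) : ∀ i, a i = 0 := by
  classical
  by_contra hne
  push Not at hne
  obtain ⟨k, hk⟩ := hne
  obtain ⟨i₀, hi₀, hmin⟩ := Finset.exists_min_image (Finset.univ.filter fun i => a i ≠ 0) W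
    ⟨k, by simp [hk]⟩
  simp only [Finset.mem_filter, Finset.mem_univ, true_and] at hi₀ hmin
  have lim : Tendsto (fun T => ∑ i, a i * (sm T ^ (W i - W i₀) * h i T)) atTop
      (𝓝 (∑ i, if i = i₀ then a i₀ * c i₀ else 0)) := by
    refine tendsto_finsetSum _ fun i _ => ?_
    by_cases hi : i = i₀
    · subst hi
      simpa using (hh i).const_mul (a i)
    · by_cases ha : a i = 0
      · simp [ha, hi]
      · have hlt : W i₀ < W i := lt_of_le_of_ne (hmin i ha) fun e => hi (hW e.symm)
        have := ((sm_tendsto.pow (W i - W i₀)).mul (hh i)).const_mul (a i)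
        have h0 : W i - W i₀ ≠ 0 := by omega
        simpa [hi, zero_pow h0] using this
  have ev : (fun T => ∑ i, a i * (sm T ^ (W i - W i₀) * h i T)) =ᶠ[atTop] fun _ => 0 := by
    filter_upwards [eventually_gt_atTop 0] with T hT
    have := hz T hT
    have e : ∑ i, a i * F i T = sm T ^ W i₀ * ∑ i, a i * (sm T ^ (W i - W i₀) * h i T) := by
      rw [Finset.mul_sum]
      refine Finset.sum_congr rfl fun i _ => ?_
      by_cases ha : a i = 0
      · simp [ha]
      · have hle := hmin i ha
        rw [hF]
        conv_lhs => rw [← Nat.add_sub_of_le hle, pow_add]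
        ring
    rw [e] at this
    rcases mul_eq_zero.mp this with h1 | h1
    · exact absurd h1 (pow_ne_zero _ (sm_ne T))
    · exact h1
  have lim0 := tendsto_nhds_unique lim ((tendsto_congr' ev).mpr tendsto_const_nhds)
  simp at lim0
  rcases lim0 with h1 | h1
  · exact hi₀ h1
  · exact hc _ h1

/-! ### The explicit basis -/

/-- leading monomials -/
def ld : Fin 20 → Fin 3 → Fin 5 :=
  ![![0,0,3], ![0,0,2], ![0,0,1], ![0,0,4], ![0,2,3],
    ![0,1,3], ![0,3,4], ![2,3,3], ![1,3,3], ![3,3,4],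
    ![0,1,2], ![0,2,4], ![2,2,3], ![0,1,4], ![1,2,3],
    ![1,1,3], ![1,2,2], ![2,2,4], ![1,1,2], ![1,1,4]]

/-- subtracted monomials -/
def ot : Fin 20 → Fin 3 → Fin 5 :=
  ![![3,3,3], ![2,2,2], ![1,1,1], ![4,4,4], ![1,4,4],
    ![2,4,4], ![1,2,4], ![2,4,4], ![1,4,4], ![4,4,4],
    ![3,4,4], ![1,3,4], ![3,4,4], ![2,3,4], ![0,4,4],
    ![3,4,4], ![1,4,4], ![4,4,4], ![2,4,4], ![4,4,4]]

/-- the twenty binomial cubics -/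
def gp (j : Fin 20) (x : Fin 5 → ℂ) : ℂ :=
  x (ld j 0) * x (ld j 1) * x (ld j 2) - x (ot j 0) * x (ot j 1) * x (ot j 2)

/-- the twenty basis functions -/
noncomputable def gf (j : Fin 20) : SiegelH2 → ℂ := fun τ => gp j (pv τ.1)

/-- leading weights -/
def Wt (j : Fin 20) : ℕ := ω (ld j 0) + ω (ld j 1) + ω (ld j 2)

/-- subtracted weights -/
def Wo (j : Fin 20) : ℕ := ω (ot j 0) + ω (ot j 1) + ω (ot j 2)

lemma Wt_inj : Function.Injective Wt := by decide

lemma Wt_lt : ∀ j, j ≠ 14 → Wt j < Wo j := by decide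

lemma Wt_le : ∀ j, Wt j ≤ Wo j := by decide

lemma gf_indep : LinearIndependent ℂ gf := by
  obtain ⟨d, v, hd, hd', hv, hP⟩ := pv_asymp
  rw [Fintype.linearIndependent_iff]
  intro a ha
  let h : Fin 20 → ℝ → ℂ := fun j T =>
    v (ld j 0) T * v (ld j 1) T * v (ld j 2) T
      - sm T ^ (Wo j - Wt j) * (v (ot j 0) T * v (ot j 1) T * v (ot j 2) T)
  let c : Fin 20 → ℂ := fun j =>
    d (ld j 0) * d (ld j 1) * d (ld j 2)
      - (0 : ℂ) ^ (Wo j - Wt j) * (d (ot j 0) * d (ot j 1) * d (ot j 2))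
  refine indep_aux (fun j T => gp j (pv (path T))) h Wt Wt_inj c ?_ ?_ ?_ a ?_
  · intro j
    by_cases hj : j = 14
    · subst hj
      have e : Wo 14 - Wt 14 = 0 := by decide
      simp only [c, e, pow_zero, one_mul]
      exact hd'
    · have := Wt_lt j hj
      have e : Wo j - Wt j ≠ 0 := by omega
      simp [c, zero_pow e, hd]
  · intro j T
    simp only [gp, hP, h]
    have e : sm T ^ Wo j = sm T ^ Wt j * sm T ^ (Wo j - Wt j) := by
      rw [← pow_add, Nat.add_sub_of_le (Wt_le j)]
    rw [mul_sub, ← mul_assoc (sm T ^ Wt j) (sm T ^ (Wo j - Wt j)), ← e]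
    simp only [Wt, Wo, pow_add]
    ring
  · intro j
    exact (((hv _).mul (hv _)).mul (hv _)).sub
      ((sm_tendsto.pow _).mul (((hv _).mul (hv _)).mul (hv _)))
  · intro T hT
    have := congrFun ha ⟨path T, path_mem hT⟩
    simpa [gf] using this

/-! ### Products of linear forms -/

/-- coefficient of a cube -/
def c1 (l m n : Fin 5 → ℤ) (a : Fin 5) : ℤ := l a * m a * n a

/-- coefficient of `x_a² x_b` -/
def c2 (l m n : Fin 5 → ℤ) (a b : Fin 5) : ℤ := l a * m a * n b + l a * m b * n a + l b * m a * n a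

/-- coefficient of `x_a x_b x_c` -/
def c3 (l m n : Fin 5 → ℤ) (a b c : Fin 5) : ℤ :=
  l a * m b * n c + l a * m c * n b + l b * m a * n c + l b * m c * n a + l c * m a * n b
    + l c * m b * n a

/-- coefficients of a product of linear forms with respect to the binomials -/
def cf (l m n : Fin 5 → ℤ) : Fin 20 → ℤ :=
  ![c2 l m n 0 3, c2 l m n 0 2, c2 l m n 0 1, c2 l m n 0 4,
    c3 l m n 0 2 3, c3 l m n 0 1 3, c3 l m n 0 3 4, c2 l m n 3 2,
    c2 l m n 3 1, c2 l m n 3 4, c3 l m n 0 1 2, c3 l m n 0 2 4,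
    c2 l m n 2 3, c3 l m n 0 1 4, c3 l m n 1 2 3, c2 l m n 1 3,
    c2 l m n 2 1, c2 l m n 2 4, c2 l m n 1 2, c2 l m n 1 4]

/-- remainder of a product of linear forms modulo the binomials -/
def rem (l m n : Fin 5 → ℤ) : Fin 15 → ℤ :=
  ![c1 l m n 0,
    c2 l m n 3 0,
    c1 l m n 3 + c2 l m n 0 3,
    c2 l m n 2 0,
    c2 l m n 1 0,
    c2 l m n 4 0 + c3 l m n 1 2 3,
    c3 l m n 2 3 4 + c3 l m n 0 1 4,
    c3 l m n 1 3 4 + c3 l m n 0 2 4,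
    c2 l m n 4 3 + c3 l m n 0 1 2 + c2 l m n 2 3 + c2 l m n 1 3,
    c1 l m n 2 + c2 l m n 0 2,
    c3 l m n 1 2 4 + c3 l m n 0 3 4,
    c2 l m n 4 2 + c3 l m n 0 1 3 + c2 l m n 3 2 + c2 l m n 1 2,
    c1 l m n 1 + c2 l m n 0 1,
    c2 l m n 4 1 + c3 l m n 0 2 3 + c2 l m n 3 1 + c2 l m n 2 1,
    c1 l m n 4 + c2 l m n 0 4 + c2 l m n 3 4 + c2 l m n 2 4 + c2 l m n 1 4]

lemma prod_eq (l m n : Fin 5 → ℤ) (x : Fin 5 → ℂ) (h0 : ∀ k, rem l m n k = 0) :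
    lf l x * lf m x * lf n x = ∑ j, (cf l m n j : ℂ) * gp j x := by
  have h : ∀ k, ((rem l m n k : ℤ) : ℂ) = 0 := fun k => by rw [h0 k]; simp
  have e : lf l x * lf m x * lf n x - ∑ j, (cf l m n j : ℂ) * gp j x
      = ∑ k, ((rem l m n k : ℤ) : ℂ) * (![x 0 * x 0 * x 0, x 0 * x 3 * x 3, x 3 * x 3 * x 3, x 0 * x 2 * x 2, x 0 * x 1 * x 1, x 0 * x 4 * x 4, x 2 * x 3 * x 4, x 1 * x 3 * x 4, x 3 * x 4 * x 4, x 2 * x 2 * x 2, x 1 * x 2 * x 4, x 2 * x 4 * x 4, x 1 * x 1 * x 1, x 1 * x 4 * x 4, x 4 * x 4 * x 4] k) := by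
    simp [Fin.sum_univ_succ, cf, rem, gp, ld, ot, lf, c1, c2, c3]
    ring
  simp only [h, zero_mul, Finset.sum_const_zero] at e
  exact sub_eq_zero.mp e

instance (κ : Char) : Decidable (IsOddChar κ) := by unfold IsOddChar; infer_instance

lemma rem_zero : ∀ i j k : Fin 10, IsOddChar (addChar (addChar (δev i) (δev j)) (δev k)) →
    ∀ t, rem (L i) (L j) (L k) t = 0 := by
  decide +kernel

lemma mem_span_gf (c : Fin 20 → ℂ) (f : SiegelH2 → ℂ)
    (h : ∀ τ : SiegelH2, f τ = ∑ j, c j * gp j (pv τ.1)) :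
    f ∈ Submodule.span ℂ (Set.range gf) := by
  have : f = ∑ j, c j • gf j := by
    funext τ
    simp [h, gf, Finset.sum_apply]
  rw [this]
  exact Submodule.sum_mem _ fun j _ =>
    Submodule.smul_mem _ _ (Submodule.subset_span ⟨j, rfl⟩)

lemma Wodd_le : Wodd ≤ Submodule.span ℂ (Set.range gf) := by
  refine Submodule.span_le.mpr ?_
  rintro g ⟨i, j, k, ho, rfl⟩
  refine mem_span_gf (fun t => (cf (L i) (L j) (L k) t : ℂ)) _ fun τ => ?_
  simp only [theta_four _ τ.2]
  exact prod_eq _ _ _ _ (rem_zero i j k ho)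

lemma gen_mem (i j k : Fin 10) (ho : IsOddChar (addChar (addChar (δev i) (δev j)) (δev k))) :
    (fun τ : SiegelH2 => theta (δev i) τ.1 ^ 4 * theta (δev j) τ.1 ^ 4 * theta (δev k) τ.1 ^ 4)
      ∈ Wodd :=
  Submodule.subset_span ⟨i, j, k, ho, rfl⟩

/-- The binomials (times 16) as combinations of products of theta constants. -/
def cert : Fin 20 → List (ℤ × Fin 10 × Fin 10 × Fin 10) :=
  ![[(2, 1, 4, 9), (1, 4, 5, 6), (2, 2, 3, 8), (1, 5, 6, 7), (1, 3, 4, 7), (4, 1, 3, 9), (1, 0, 4, 7), (2, 1, 7, 9), (2, 0, 2, 8), (-2, 0, 5, 6)],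
    [(2, 1, 3, 6), (-1, 1, 4, 9), (1, 0, 3, 6), (1, 0, 2, 7), (1, 0, 3, 7), (1, 1, 5, 8), (2, 1, 2, 7), (1, 0, 2, 6)],
    [(1, 1, 2, 5), (1, 1, 2, 4), (1, 0, 3, 4), (1, 0, 3, 5), (1, 2, 3, 4), (1, 0, 1, 5), (1, 2, 3, 5), (1, 0, 1, 4)],
    [(-2, 2, 5, 9), (3, 1, 2, 4), (-1, 6, 7, 9), (2, 2, 4, 8), (-1, 1, 3, 7), (1, 0, 4, 9), (1, 6, 7, 8), (-1, 0, 5, 8), (-3, 1, 2, 5), (1, 1, 3, 6)],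
    [(1, 1, 6, 8), (1, 0, 6, 9), (1, 3, 7, 9), (1, 2, 7, 8)],
    [(1, 3, 4, 8), (1, 2, 5, 9), (1, 1, 4, 9), (1, 0, 5, 8)],
    [(-1, 1, 2, 4), (1, 1, 2, 5), (1, 0, 3, 6), (-1, 0, 3, 7)],
    [(1, 6, 8, 9), (1, 7, 8, 9)],
    [(1, 5, 8, 9), (1, 4, 8, 9)],
    [(-1, 5, 8, 9), (1, 4, 8, 9)],
    [(1, 0, 5, 6), (1, 3, 4, 7), (1, 1, 4, 6), (1, 2, 5, 7)],
    [(1, 2, 7, 8), (1, 1, 6, 8), (-1, 1, 7, 9), (-1, 2, 6, 9)],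
    [(1, 6, 7, 8), (1, 6, 7, 9)],
    [(1, 0, 5, 6), (-1, 1, 5, 7), (1, 1, 4, 6), (-1, 0, 4, 7)],
    [(-1, 3, 4, 8), (1, 0, 4, 9), (-1, 2, 5, 9), (1, 1, 5, 8)],
    [(1, 4, 5, 8), (1, 4, 5, 9)],
    [(1, 5, 6, 7), (1, 4, 6, 7)],
    [(1, 6, 7, 8), (-1, 6, 7, 9)],
    [(1, 4, 5, 6), (1, 4, 5, 7)],
    [(1, 4, 5, 8), (-1, 4, 5, 9)]]

lemma cert_odd : ∀ j, ∀ p ∈ cert j,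
    IsOddChar (addChar (addChar (δev p.2.1) (δev p.2.2.1)) (δev p.2.2.2)) := by
  decide +kernel

lemma cert_eq (j : Fin 20) (x : Fin 5 → ℂ) :
    gp j x = ((cert j).map fun p =>
      ((p.1 : ℂ) / 16) * (lf (L p.2.1) x * lf (L p.2.2.1) x * lf (L p.2.2.2) x)).sum := by
  fin_cases j <;> simp [cert, gp, ld, ot, lf, L] <;> ring

lemma list_mem (l : List (ℤ × Fin 10 × Fin 10 × Fin 10))
    (h : ∀ p ∈ l, IsOddChar (addChar (addChar (δev p.2.1) (δev p.2.2.1)) (δev p.2.2.2))) :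
    (fun τ : SiegelH2 => (l.map fun p => ((p.1 : ℂ) / 16) *
      (lf (L p.2.1) (pv τ.1) * lf (L p.2.2.1) (pv τ.1) * lf (L p.2.2.2) (pv τ.1))).sum) ∈ Wodd := by
  induction l with
  | nil => exact Submodule.zero_mem _
  | cons p l ih =>
    simp only [List.map_cons, List.sum_cons]
    refine Submodule.add_mem _ ?_ (ih fun q hq => h q (List.mem_cons_of_mem _ hq))
    have := Submodule.smul_mem Wodd ((p.1 : ℂ) / 16)
      (gen_mem p.2.1 p.2.2.1 p.2.2.2 (h p List.mem_cons_self))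
    convert this using 1
    funext τ
    simp [theta_four _ τ.2]

lemma Wodd_eq : Wodd = Submodule.span ℂ (Set.range gf) := by
  refine le_antisymm Wodd_le (Submodule.span_le.mpr ?_)
  rintro _ ⟨j, rfl⟩
  have := list_mem (cert j) (cert_odd j)
  simp only [← cert_eq] at this
  exact this

/-! ### `Dd` and `Xi6` -/

/-- coefficients of `48 Dd` with respect to the binomials -/
def dc : Fin 10 → Fin 20 → ℤ :=
  ![![-8,-8,-8,0,-24,-24,0,0,0,0,-24,0,0,0,-24,0,0,0,0,0],
    ![8,-8,8,0,24,-24,0,0,0,0,24,0,0,0,-24,0,0,0,0,0],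
    ![8,8,-8,0,-24,24,0,0,0,0,24,0,0,0,-24,0,0,0,0,0],
    ![-8,8,8,0,24,24,0,0,0,0,-24,0,0,0,-24,0,0,0,0,0],
    ![0,0,8,8,0,0,0,0,24,24,0,0,0,0,0,0,24,24,0,-72],
    ![0,0,8,-8,0,0,0,0,24,-24,0,0,0,0,0,0,24,-24,0,72],
    ![0,8,0,8,0,0,0,24,0,24,0,0,0,0,0,0,0,-72,24,24],
    ![0,8,0,-8,0,0,0,24,0,-24,0,0,0,0,0,0,0,72,24,-24],
    ![8,0,0,8,0,0,0,0,0,-72,0,0,24,0,0,24,0,24,0,24],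
    ![8,0,0,-8,0,0,0,0,0,72,0,0,24,0,0,24,0,-24,0,-24]]

lemma Dd_mem (d : Fin 10) : (fun τ : SiegelH2 => Dd d τ.1) ∈ Wodd := by
  rw [Wodd_eq]
  refine mem_span_gf (fun j => (dc d j : ℂ) / 48) _ fun τ => ?_
  have e8 : ∀ i, theta (δev i) τ.1 ^ 8 = lf (L i) (pv τ.1) ^ 2 := fun i => by
    rw [← theta_four i τ.2]; ring
  have e12 : theta (δev d) τ.1 ^ 12 = lf (L d) (pv τ.1) ^ 3 := by
    rw [← theta_four d τ.2]; ring
  simp only [Dd, e8, e12, theta_four _ τ.2]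
  generalize pv τ.1 = x
  have hS : ∑ i, lf (L i) x ^ 2
      = 4 * x 0 ^ 2 + 12 * (x 1 ^ 2 + x 2 ^ 2 + x 3 ^ 2) + 24 * x 4 ^ 2 := by
    simp [Fin.sum_univ_succ, lf, L]
    ring
  rw [hS]
  fin_cases d <;> simp [Fin.sum_univ_succ, dc, gp, ld, ot, lf, L] <;> ring

/-- the characteristics in `Xi6` -/
def xch (d : Fin 10) (i j m : Fin 3) : Char :=
  addChar (addChar (νodd (triad d (Fin.castLE (by norm_num) i)))
    (νodd (triad d (Fin.castLE (by norm_num) j)))) (νodd (triad d (⟨m.1 + 3, by omega⟩ : Fin 6)))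

lemma xch_even : ∀ (d : Fin 10) (i j m : Fin 3), i < j → ∃ a, xch d i j m = δev a := by
  decide +kernel

lemma xch_odd : ∀ (d : Fin 10) (i j : Fin 3), i < j →
    IsOddChar (addChar (addChar (xch d i j 0) (xch d i j 1)) (xch d i j 2)) := by
  decide +kernel

lemma Xi6_mem (d : Fin 10) : (fun τ : SiegelH2 => Xi6 d τ.1) ∈ Wodd := by
  have e : (fun τ : SiegelH2 => Xi6 d τ.1) = ∑ i : Fin 3, ∑ j : Fin 3,
      if i < j then
        sig (νodd (triad d (Fin.castLE (by norm_num) i)))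
          (νodd (triad d (Fin.castLE (by norm_num) j))) •
          (fun τ : SiegelH2 => ∏ m : Fin 3, theta (xch d i j m) τ.1 ^ 4)
      else 0 := by
    funext τ
    simp only [Xi6, Finset.sum_apply]
    refine Finset.sum_congr rfl fun i _ => Finset.sum_congr rfl fun j _ => ?_
    split_ifs <;> rfl
  rw [e]
  refine Submodule.sum_mem _ fun i _ => Submodule.sum_mem _ fun j _ => ?_
  split_ifs with hij
  · refine Submodule.smul_mem _ _ ?_
    have ho := xch_odd d i j hij
    obtain ⟨a, ha⟩ := xch_even d i j 0 hij
    obtain ⟨b, hb⟩ := xch_even d i j 1 hij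
    obtain ⟨c, hc⟩ := xch_even d i j 2 hij
    simp only [Fin.prod_univ_three]
    rw [ha, hb, hc] at ho ⊢
    exact gen_mem a b c ho
  · exact Submodule.zero_mem _

/-- `W` has dimension exactly 20 and contains every `Ξ₆[δ]` and every `f_δ`. -/
theorem statement15 :
    Module.finrank ℂ ↥Wodd = 20 ∧
    ∀ d : Fin 10,
      (fun τ : SiegelH2 => Xi6 d τ.1) ∈ Wodd ∧ (fun τ : SiegelH2 => fδ d τ.1) ∈ Wodd := by
  refine ⟨?_, fun d => ⟨Xi6_mem d, ?_⟩⟩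
  · rw [Wodd_eq, finrank_span_eq_card gf_indep]
    simp
  · exact Submodule.sub_mem _ (Submodule.smul_mem _ (2 : ℂ) (Xi6_mem d)) (Dd_mem d)

end TwoLoop
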